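/- arXiv:2009.10024 — 3 statements merged into one kernel-verified Lean document; each statement's English description precedes it below -/
import Mathlib

section
/- Let 𝒲 be a weakly exact structure on an additive category 𝒜, let i : A ⟶ B and i' : A' ⟶ B' be admissible monics of 𝒲, and let f : A ⟶ A' and f' : B ⟶ B' be morphisms with i' ∘ f = f' ∘ i. Then the following statements are equivalent: (i) the commutative square with sides i, f, f', i' is a pushout; (ii) the pair consisting of the morphism A ⟶ B ⊕ A' with components (i, −f) followed by the morphism B ⊕ A' ⟶ B' with components (f', i') is a kernel–cokernel pair belonging to 𝒲; (iii) the square is bicartesian, i.e. both a pushout and a pullback; (iv) there exist morphisms p : B ⟶ C and p' : B' ⟶ C such that (i, p) ∈ 𝒲, (i', p') ∈ 𝒲 and p' ∘ f' = p. -/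
/-!
A pushout square identifies the cokernels of `i` and `i'`, and `i'` is an admissible monic along
with `i`; this gives (iv). Conversely, suppose that `i` and `i'` have a common cokernel `Z`, with
`p = f' ≫ p'`. If `p b = p' b'`, then `p'` kills `b' - f' b`, which therefore lies in `A'`. Hence
`B ⊞ A'`, with its maps `biprod.fst` to `B` and `biprod.desc f' i'` to `B'`, is the pullback of `p`
and `p'`. So `biprod.desc f' i'` is an admissible epic with the same kernel object `A` as `p`, now
embedded by `biprod.lift i (-f)`; this is (ii). Finally, a kernel–cokernel pair of the shape in (ii)
says exactly that the square is both a pullback and a pushout.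
-/

open CategoryTheory CategoryTheory.Limits ZeroObject

universe w v u

namespace WeaklyExactPaper

section Preamble

variable {C : Type u} [Category.{v} C] [Preadditive C] [HasZeroObject C] [HasBinaryBiproducts C]

/-- `(i, d)` is a kernel–cokernel pair: `i` is a kernel of `d` and `d` is a cokernel of `i`. -/
structure IsKernelCokernelPair {A B Z : C} (i : A ⟶ B) (d : B ⟶ Z) : Prop where
  w : i ≫ d = 0
  isKernel : Nonempty (IsLimit (KernelFork.ofι i w))
  isCokernel : Nonempty (IsColimit (CokernelCofork.ofπ d w))

/-- Isomorphism of composable pairs `(i, d) ≅ (i', d')`. -/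
def PairIso {A B Z A' B' Z' : C} (i : A ⟶ B) (d : B ⟶ Z) (i' : A' ⟶ B') (d' : B' ⟶ Z') : Prop :=
  ∃ (eA : A ≅ A') (eB : B ≅ B') (eZ : Z ≅ Z'),
    i ≫ eB.hom = eA.hom ≫ i' ∧ d ≫ eZ.hom = eB.hom ≫ d'

/-- `f` is a kernel of some morphism. -/
def IsSomeKernel {A B : C} (f : A ⟶ B) : Prop :=
  ∃ (Z : C) (g : B ⟶ Z) (w : f ≫ g = 0), Nonempty (IsLimit (KernelFork.ofι f w))

/-- `g` is a cokernel of some morphism. -/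
def IsSomeCokernel {B Z : C} (g : B ⟶ Z) : Prop :=
  ∃ (A : C) (f : A ⟶ B) (w : f ≫ g = 0), Nonempty (IsColimit (CokernelCofork.ofπ g w))

/-- `f` admits a cokernel. -/
def AdmitsCokernel {A B : C} (f : A ⟶ B) : Prop :=
  ∃ (Z : C) (g : B ⟶ Z) (w : f ≫ g = 0), Nonempty (IsColimit (CokernelCofork.ofπ g w))

/-- `g` admits a kernel. -/
def AdmitsKernel {B Z : C} (g : B ⟶ Z) : Prop :=
  ∃ (A : C) (f : A ⟶ B) (w : f ≫ g = 0), Nonempty (IsLimit (KernelFork.ofι f w))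

/-- A weakly exact structure on an additive category: a class of kernel–cokernel pairs,
closed under isomorphisms of composable pairs and binary direct sums, containing the pairs
`(1_X, X ⟶ 0)` and `(0 ⟶ X, 1_X)`, and satisfying the pushout axiom (E2) and the
pullback axiom (E2)ᵒᵖ. -/
structure WeaklyExactStructure (C : Type u) [Category.{v} C] [Preadditive C]
    [HasZeroObject C] [HasBinaryBiproducts C] where
  W : ∀ ⦃A B Z : C⦄, (A ⟶ B) → (B ⟶ Z) → Prop
  kc_of_mem : ∀ {A B Z : C} {i : A ⟶ B} {d : B ⟶ Z}, W i d → IsKernelCokernelPair i d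
  iso_closed : ∀ {A B Z A' B' Z' : C} {i : A ⟶ B} {d : B ⟶ Z} {i' : A' ⟶ B'} {d' : B' ⟶ Z'},
    W i d → PairIso i d i' d' → W i' d'
  sum_mem : ∀ {A₁ B₁ Z₁ A₂ B₂ Z₂ : C} {i₁ : A₁ ⟶ B₁} {d₁ : B₁ ⟶ Z₁} {i₂ : A₂ ⟶ B₂}
    {d₂ : B₂ ⟶ Z₂}, W i₁ d₁ → W i₂ d₂ → W (biprod.map i₁ i₂) (biprod.map d₁ d₂)
  id_zero_mem : ∀ X : C, W (𝟙 X) (0 : X ⟶ (0 : C))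
  zero_id_mem : ∀ X : C, W (0 : (0 : C) ⟶ X) (𝟙 X)
  pushout_mem : ∀ {A B Z A' : C} {i : A ⟶ B} {d : B ⟶ Z}, W i d → ∀ t : A ⟶ A',
    ∃ (S : C) (g : B ⟶ S) (i' : A' ⟶ S), IsPushout i t g i' ∧ ∃ (Z' : C) (d' : S ⟶ Z'), W i' d'
  pullback_mem : ∀ {A B Z D : C} {i : A ⟶ B} {d : B ⟶ Z}, W i d → ∀ t : D ⟶ Z,
    ∃ (P : C) (p : P ⟶ B) (q : P ⟶ D), IsPullback p q d t ∧ ∃ (A'' : C) (i'' : A'' ⟶ P), W i'' q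

/-- `i` is an admissible monic of `𝒲`. -/
def AdmissibleMonic (𝒲 : WeaklyExactStructure C) {A B : C} (i : A ⟶ B) : Prop :=
  ∃ (Z : C) (d : B ⟶ Z), 𝒲.W i d

/-- `d` is an admissible epic of `𝒲`. -/
def AdmissibleEpic (𝒲 : WeaklyExactStructure C) {B Z : C} (d : B ⟶ Z) : Prop :=
  ∃ (A : C) (i : A ⟶ B), 𝒲.W i d

/-- `(i, d)` is a split kernel–cokernel pair. -/
def IsSplitPair {A B Z : C} (i : A ⟶ B) (d : B ⟶ Z) : Prop :=
  ∃ (X Y : C), PairIso (biprod.inl : X ⟶ X ⊞ Y) (biprod.snd : X ⊞ Y ⟶ Y) i d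

end Preamble

section KernelsAndCokernels

variable {C : Type u} [Category.{v} C]

lemma nonempty_isLimit_kernelFork_of_isPullback [HasZeroMorphisms C] {A P B D Z : C}
    {a : P ⟶ B} {b : P ⟶ D} {p : B ⟶ Z} {t : D ⟶ Z} (sq : IsPullback a b p t)
    {i : A ⟶ B} {w : i ≫ p = 0} (hi : IsLimit (KernelFork.ofι i w))
    {k : A ⟶ P} (hka : k ≫ a = i) (hkb : k ≫ b = 0) :
    Nonempty (IsLimit (KernelFork.ofι k hkb)) := by
  have : Mono i := Fork.IsLimit.mono hi
  have : Mono k := mono_of_mono_fac hka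
  refine ⟨KernelFork.IsLimit.ofι' k hkb fun x hx => ?_⟩
  obtain ⟨l, hl⟩ := KernelFork.IsLimit.lift' hi (x ≫ a) (by
    rw [Category.assoc, sq.w, reassoc_of% hx, zero_comp])
  refine ⟨l, sq.hom_ext ?_ ?_⟩
  · rw [Category.assoc, hka]; exact hl
  · rw [Category.assoc, hkb, comp_zero, hx]

lemma nonempty_isColimit_cokernelCofork_of_isPushout [HasZeroMorphisms C] {A B A' B' Z : C}
    {i : A ⟶ B} {f : A ⟶ A'} {f' : B ⟶ B'} {i' : A' ⟶ B'} (sq : IsPushout i f f' i')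
    {p : B ⟶ Z} {w : i ≫ p = 0} (hp : IsColimit (CokernelCofork.ofπ p w))
    {p' : B' ⟶ Z} (hf' : f' ≫ p' = p) (hi' : i' ≫ p' = 0) :
    Nonempty (IsColimit (CokernelCofork.ofπ p' hi')) := by
  have : Epi p := Cofork.IsColimit.epi hp
  have : Epi p' := epi_of_epi_fac hf'
  refine ⟨CokernelCofork.IsColimit.ofπ' p' hi' fun x hx => ?_⟩
  obtain ⟨l, hl⟩ := CokernelCofork.IsColimit.desc' hp (f' ≫ x) (by
    rw [sq.w_assoc, hx, comp_zero])
  refine ⟨l, sq.hom_ext ?_ ?_⟩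
  · rw [reassoc_of% hf']; exact hl
  · rw [reassoc_of% hi', zero_comp, hx]

variable [Preadditive C]

lemma isPullback_fst_desc_of_isLimit_kernelFork {B A' B' Z : C} [HasBinaryBiproduct B A']
    {i' : A' ⟶ B'} {p' : B' ⟶ Z} {w : i' ≫ p' = 0} (hi' : IsLimit (KernelFork.ofι i' w))
    (f' : B ⟶ B') :
    IsPullback biprod.fst (biprod.desc f' i') (f' ≫ p') p' := by
  have : Mono i' := Fork.IsLimit.mono hi'
  have difference_lifts (s : PullbackCone (f' ≫ p') p') :
      ∃ l : s.pt ⟶ A', l ≫ i' = s.snd - s.fst ≫ f' := by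
    obtain ⟨l, hl⟩ := KernelFork.IsLimit.lift' hi' (s.snd - s.fst ≫ f') (by
      rw [Preadditive.sub_comp, Category.assoc, s.condition, sub_self])
    exact ⟨l, hl⟩
  choose l hl using difference_lifts
  refine ⟨⟨by ext <;> simp [w]⟩, ⟨PullbackCone.IsLimit.mk _ (fun s => biprod.lift s.fst (l s))
    (fun s => by simp) (fun s => by simp [hl]) fun s m hfst hsnd => ?_⟩⟩
  ext
  · simpa using hfst
  · rw [biprod.lift_snd, ← cancel_mono i', hl, ← hsnd, ← hfst, biprod.desc_eq]
    simp

lemma isPullback_of_isLimit_kernelFork_lift_neg {A B A' B' : C} [HasBinaryBiproduct B A']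
    {i : A ⟶ B} {f : A ⟶ A'} {f' : B ⟶ B'} {i' : A' ⟶ B'}
    {w : biprod.lift i (-f) ≫ biprod.desc f' i' = 0}
    (h : IsLimit (KernelFork.ofι (biprod.lift i (-f)) w)) : IsPullback i f f' i' := by
  have sq : CommSq i f f' i' := ⟨by simpa [add_neg_eq_zero] using w⟩
  have hsq : IsLimit sq.kernelFork :=
    IsKernel.ofIso _ h sq.kernelFork (biprod.mapIso (Iso.refl B) (-Iso.refl A'))
      (Iso.refl B') (Iso.refl A) (by ext <;> simp) (by ext <;> simp)
  exact ⟨sq, ⟨sq.isLimitEquivIsLimitKernelFork.symm hsq⟩⟩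

lemma isPushout_of_isColimit_cokernelCofork_desc {A B A' B' : C} [HasBinaryBiproduct B A']
    {i : A ⟶ B} {f : A ⟶ A'} {f' : B ⟶ B'} {i' : A' ⟶ B'}
    {w : biprod.lift i (-f) ≫ biprod.desc f' i' = 0}
    (h : IsColimit (CokernelCofork.ofπ (biprod.desc f' i') w)) : IsPushout i f f' i' := by
  have sq : CommSq i f f' i' := ⟨by simpa [add_neg_eq_zero] using w⟩
  exact ⟨sq, ⟨sq.isColimitEquivIsColimitCokernelCofork.symm h⟩⟩

end KernelsAndCokernels

section AdmissibleMorphisms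

variable {C : Type u} [Category.{v} C] [Preadditive C] [HasZeroObject C] [HasBinaryBiproducts C]
  {𝒲 : WeaklyExactStructure C}

lemma AdmissibleMonic.mem_of_isColimit {A B Z : C} {i : A ⟶ B} (hi : AdmissibleMonic 𝒲 i)
    {d : B ⟶ Z} {w : i ≫ d = 0} (hd : IsColimit (CokernelCofork.ofπ d w)) : 𝒲.W i d := by
  obtain ⟨Z₀, d₀, hW⟩ := hi
  obtain ⟨hd₀⟩ := (𝒲.kc_of_mem hW).isCokernel
  refine 𝒲.iso_closed hW
    ⟨Iso.refl A, Iso.refl B, hd₀.coconePointUniqueUpToIso hd, by simp, ?_⟩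
  simpa using hd₀.comp_coconePointUniqueUpToIso_hom hd .one

lemma AdmissibleEpic.mem_of_isLimit {A B Z : C} {d : B ⟶ Z} (hd : AdmissibleEpic 𝒲 d)
    {i : A ⟶ B} {w : i ≫ d = 0} (hi : IsLimit (KernelFork.ofι i w)) : 𝒲.W i d := by
  obtain ⟨A₀, i₀, hW⟩ := hd
  obtain ⟨hi₀⟩ := (𝒲.kc_of_mem hW).isKernel
  refine 𝒲.iso_closed hW
    ⟨hi₀.conePointUniqueUpToIso hi, Iso.refl B, Iso.refl Z, ?_, by simp⟩
  simpa using (hi₀.conePointUniqueUpToIso_hom_comp hi .zero).symm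

lemma AdmissibleMonic.of_isPushout {A B A' B' : C} {i : A ⟶ B} {f : A ⟶ A'} {f' : B ⟶ B'}
    {i' : A' ⟶ B'} (hi : AdmissibleMonic 𝒲 i) (sq : IsPushout i f f' i') :
    AdmissibleMonic 𝒲 i' := by
  obtain ⟨Z, d, hW⟩ := hi
  obtain ⟨S, g, j, sq₀, Z', d', hW'⟩ := 𝒲.pushout_mem hW f
  refine ⟨Z', (sq.isoIsPushout _ _ sq₀).hom ≫ d', 𝒲.iso_closed hW'
    ⟨Iso.refl A', sq₀.isoIsPushout _ _ sq, Iso.refl Z', by simp, ?_⟩⟩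
  apply sq₀.hom_ext <;> simp

lemma AdmissibleEpic.of_isPullback {P B D Z : C} {a : P ⟶ B} {b : P ⟶ D} {p : B ⟶ Z}
    {t : D ⟶ Z} (hp : AdmissibleEpic 𝒲 p) (sq : IsPullback a b p t) :
    AdmissibleEpic 𝒲 b := by
  obtain ⟨A, i, hW⟩ := hp
  obtain ⟨P₀, a₀, b₀, sq₀, A', i', hW'⟩ := 𝒲.pullback_mem hW t
  refine ⟨A', i' ≫ (sq₀.isoIsPullback _ _ sq).hom, 𝒲.iso_closed hW'
    ⟨Iso.refl A', sq₀.isoIsPullback _ _ sq, Iso.refl D, by simp, by simp⟩⟩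

end AdmissibleMorphisms

section PushoutSquares

variable {C : Type u} [Category.{v} C] [Preadditive C] [HasZeroObject C] [HasBinaryBiproducts C]
  {𝒲 : WeaklyExactStructure C} {A B A' B' : C} {i : A ⟶ B} {i' : A' ⟶ B'} {f : A ⟶ A'}
  {f' : B ⟶ B'}

lemma AdmissibleMonic.exists_mem_mem_comp_eq_of_isPushout (hi : AdmissibleMonic 𝒲 i)
    (sq : IsPushout i f f' i') :
    ∃ (Z : C) (p : B ⟶ Z) (p' : B' ⟶ Z), 𝒲.W i p ∧ 𝒲.W i' p' ∧ f' ≫ p' = p := by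
  have ⟨Z, p, hp⟩ := hi
  have kc := 𝒲.kc_of_mem hp
  have w : i ≫ p = f ≫ (0 : A' ⟶ Z) := by rw [kc.w, comp_zero]
  obtain ⟨hp'⟩ := nonempty_isColimit_cokernelCofork_of_isPushout sq kc.isCokernel.some
    (sq.inl_desc p 0 w) (sq.inr_desc p 0 w)
  exact ⟨Z, p, sq.desc p 0 w, hp, (hi.of_isPushout sq).mem_of_isColimit hp', sq.inl_desc p 0 w⟩

lemma WeaklyExactStructure.mem_lift_neg_desc_of_isLimit_kernelFork {Z : C} {p' : B' ⟶ Z}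
    (hcomm : i ≫ f' = f ≫ i') (hp : 𝒲.W i (f' ≫ p')) {w : i' ≫ p' = 0}
    (hi' : IsLimit (KernelFork.ofι i' w)) :
    𝒲.W (biprod.lift i (-f)) (biprod.desc f' i') := by
  have sq := isPullback_fst_desc_of_isLimit_kernelFork hi' f'
  have hdesc : AdmissibleEpic 𝒲 (biprod.desc f' i') := .of_isPullback ⟨A, i, hp⟩ sq
  obtain ⟨hlift⟩ := nonempty_isLimit_kernelFork_of_isPullback sq
    (𝒲.kc_of_mem hp).isKernel.some (biprod.lift_fst i (-f)) (by simp [hcomm])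
  exact hdesc.mem_of_isLimit hlift

theorem statement2_general (hi : AdmissibleMonic 𝒲 i) (hcomm : i ≫ f' = f ≫ i') :
    [IsPushout i f f' i',
      𝒲.W (biprod.lift i (-f)) (biprod.desc f' i'),
      IsPushout i f f' i' ∧ IsPullback i f f' i',
      ∃ (Z : C) (p : B ⟶ Z) (p' : B' ⟶ Z), 𝒲.W i p ∧ 𝒲.W i' p' ∧ f' ≫ p' = p].TFAE := by
  tfae_have 1 → 4 := hi.exists_mem_mem_comp_eq_of_isPushout
  tfae_have 4 → 2
  | ⟨_, _, _, hp, hp', rfl⟩ =>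
    WeaklyExactStructure.mem_lift_neg_desc_of_isLimit_kernelFork hcomm hp
      (𝒲.kc_of_mem hp').isKernel.some
  tfae_have 2 → 3 := fun h =>
    have kc := 𝒲.kc_of_mem h
    ⟨isPushout_of_isColimit_cokernelCofork_desc kc.isCokernel.some,
      isPullback_of_isLimit_kernelFork_lift_neg kc.isKernel.some⟩
  tfae_have 3 → 1 := And.left
  tfae_finish

end PushoutSquares

section Statement

variable {C : Type u} [Category.{v} C] [Preadditive C] [HasZeroObject C] [HasBinaryBiproducts C]

/-- Characterisations of pushout squares along two admissible monics
(weakly exact version of Bühler's Proposition 2.12). -/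
theorem statement2 (𝒲 : WeaklyExactStructure C) {A B A' B' : C}
    (i : A ⟶ B) (i' : A' ⟶ B') (f : A ⟶ A') (f' : B ⟶ B')
    (hi : AdmissibleMonic 𝒲 i) (hi' : AdmissibleMonic 𝒲 i')
    (hcomm : i ≫ f' = f ≫ i') :
    (IsPushout i f f' i' ↔ 𝒲.W (biprod.lift i (-f)) (biprod.desc f' i')) ∧
    (IsPushout i f f' i' ↔ (IsPushout i f f' i' ∧ IsPullback i f f' i')) ∧
    (IsPushout i f f' i' ↔
      ∃ (Z : C) (p : B ⟶ Z) (p' : B' ⟶ Z), 𝒲.W i p ∧ 𝒲.W i' p' ∧ f' ≫ p' = p) :=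
  have tfae := statement2_general hi hcomm
  ⟨tfae.out 0 1, tfae.out 0 2, tfae.out 0 3⟩

end Statement

end WeaklyExactPaper
end

section
/- Let 𝒲 be a weakly exact structure on an additive category 𝒜, let (i : A ⟶ B, d : B ⟶ C) ∈ 𝒲 and let t : A ⟶ A' be any morphism. Then a pushout of i along t exists, giving a pushout square with morphisms i' : A' ⟶ B' and g : B ⟶ B'; there is a unique morphism d' : B' ⟶ C with d' ∘ g = d and d' ∘ i' = 0, the pair (i', d') is a kernel–cokernel pair, and (i', d') belongs to 𝒲. Dually, the pullback of d along any morphism c : C' ⟶ C yields a kernel–cokernel pair belonging to 𝒲. -/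
/-!
A morphism out of the pushout `B'` that kills `i'` is the same thing as a morphism out of `B` that
kills `i`, so the morphism `d'` induced by `d` and `0` is a cokernel of `i'`. By (E2) `i'` is the
first component of some admissible pair, whose second component is also a cokernel of `i'`; hence
that pair is isomorphic to `(i', d')`. The argument for pullbacks is dual.
-/

open CategoryTheory CategoryTheory.Limits ZeroObject

universe w v u

namespace WeaklyExactPaper

section Statement

variable {C : Type u} [Category.{v} C] [Preadditive C] [HasZeroObject C] [HasBinaryBiproducts C]

section HasZeroMorphisms

variable {𝒜 : Type u} [Category.{v} 𝒜] [HasZeroMorphisms 𝒜]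

theorem nonempty_isColimit_cokernelCofork_of_isPushout_s10 {A B Z A' B' : 𝒜} {i : A ⟶ B} {d : B ⟶ Z}
    {w : i ≫ d = 0} (hd : IsColimit (CokernelCofork.ofπ d w)) {t : A ⟶ A'} {g : B ⟶ B'}
    {i' : A' ⟶ B'} (sq : IsPushout i t g i') {d' : B' ⟶ Z} (hgd' : g ≫ d' = d)
    (w' : i' ≫ d' = 0) : Nonempty (IsColimit (CokernelCofork.ofπ d' w')) := by
  have comp_eq_zero {X : 𝒜} (k : B' ⟶ X) (hk : i' ≫ k = 0) : i ≫ g ≫ k = 0 := by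
    rw [sq.w_assoc, hk, comp_zero]
  have epi_d : Epi d := Cofork.IsColimit.epi hd
  have epi_d' : Epi d' := by
    rw [← hgd'] at epi_d
    exact epi_of_epi g d'
  refine ⟨CokernelCofork.IsColimit.ofπ' d' w' fun k hk ↦ ?_⟩
  obtain ⟨l, hl : d ≫ l = g ≫ k⟩ :=
    CokernelCofork.IsColimit.desc' hd (g ≫ k) (comp_eq_zero k hk)
  exact ⟨l, sq.hom_ext (by rw [reassoc_of% hgd', hl]) (by rw [reassoc_of% w', zero_comp, hk])⟩

theorem nonempty_isLimit_kernelFork_of_isPullback_s10 {A B Z P Z' : 𝒜} {i : A ⟶ B} {d : B ⟶ Z}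
    {w : i ≫ d = 0} (hi : IsLimit (KernelFork.ofι i w)) {c : Z' ⟶ Z} {p : P ⟶ B}
    {q : P ⟶ Z'} (sq : IsPullback p q d c) {i' : A ⟶ P} (hi'p : i' ≫ p = i)
    (w' : i' ≫ q = 0) : Nonempty (IsLimit (KernelFork.ofι i' w')) := by
  have comp_eq_zero {X : 𝒜} (k : X ⟶ P) (hk : k ≫ q = 0) : (k ≫ p) ≫ d = 0 := by
    rw [Category.assoc, sq.w, reassoc_of% hk, zero_comp]
  have mono_i : Mono i := Fork.IsLimit.mono hi
  have mono_i' : Mono i' := by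
    rw [← hi'p] at mono_i
    exact mono_of_mono i' p
  refine ⟨KernelFork.IsLimit.ofι' i' w' fun k hk ↦ ?_⟩
  obtain ⟨l, hl : l ≫ i = k ≫ p⟩ :=
    KernelFork.IsLimit.lift' hi (k ≫ p) (comp_eq_zero k hk)
  exact ⟨l, sq.hom_ext (by rw [Category.assoc, hi'p, hl])
    (by rw [Category.assoc, w', comp_zero, hk])⟩

end HasZeroMorphisms

namespace WeaklyExactStructure

variable (𝒲 : WeaklyExactStructure C) {A B Z : C} {i : A ⟶ B} {d : B ⟶ Z}

theorem W_of_isColimit {Z' : C} {d' : B ⟶ Z'} (h : 𝒲.W i d) {w' : i ≫ d' = 0}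
    (hd' : IsColimit (CokernelCofork.ofπ d' w')) : 𝒲.W i d' := by
  obtain ⟨hd⟩ := (𝒲.kc_of_mem h).isCokernel
  have comp_iso : d ≫ (hd.coconePointUniqueUpToIso hd').hom = d' :=
    hd.comp_coconePointUniqueUpToIso_hom hd' WalkingParallelPair.one
  exact 𝒲.iso_closed h ⟨Iso.refl A, Iso.refl B, hd.coconePointUniqueUpToIso hd', by simp,
    by rw [comp_iso, Iso.refl_hom, Category.id_comp]⟩

theorem W_of_isLimit {A' : C} {i' : A' ⟶ B} (h : 𝒲.W i d) {w' : i' ≫ d = 0}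
    (hi' : IsLimit (KernelFork.ofι i' w')) : 𝒲.W i' d := by
  obtain ⟨hi⟩ := (𝒲.kc_of_mem h).isKernel
  have iso_comp : (hi.conePointUniqueUpToIso hi').hom ≫ i' = i :=
    hi.conePointUniqueUpToIso_hom_comp hi' WalkingParallelPair.zero
  exact 𝒲.iso_closed h ⟨hi.conePointUniqueUpToIso hi', Iso.refl B, Iso.refl Z,
    by rw [iso_comp, Iso.refl_hom, Category.comp_id], by simp⟩

theorem W_of_isPushout (h : 𝒲.W i d) {A' B' : C} {t : A ⟶ A'} {g : B ⟶ B'} {i' : A' ⟶ B'}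
    (sq : IsPushout i t g i') {d' : B' ⟶ Z} (hgd' : g ≫ d' = d) (w' : i' ≫ d' = 0) :
    𝒲.W i' d' := by
  obtain ⟨S, g₀, i₀, sq₀, Z₀, d₀, h₀⟩ := 𝒲.pushout_mem h t
  let φ : S ≅ B' := sq₀.isoIsPushout _ _ sq
  have mem_transport : 𝒲.W i' (φ.inv ≫ d₀) :=
    𝒲.iso_closed h₀ ⟨Iso.refl A', φ, Iso.refl Z₀, by simp [φ], by simp⟩
  obtain ⟨hd⟩ := (𝒲.kc_of_mem h).isCokernel
  obtain ⟨hd'⟩ := nonempty_isColimit_cokernelCofork_of_isPushout_s10 hd sq hgd' w'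
  exact 𝒲.W_of_isColimit mem_transport hd'

theorem W_of_isPullback (h : 𝒲.W i d) {P D : C} {c : D ⟶ Z} {p : P ⟶ B} {q : P ⟶ D}
    (sq : IsPullback p q d c) {i' : A ⟶ P} (hi'p : i' ≫ p = i) (w' : i' ≫ q = 0) :
    𝒲.W i' q := by
  obtain ⟨P₀, p₀, q₀, sq₀, A₀, i₀, h₀⟩ := 𝒲.pullback_mem h c
  let φ : P₀ ≅ P := sq₀.isoIsPullback _ _ sq
  have mem_transport : 𝒲.W (i₀ ≫ φ.hom) q :=
    𝒲.iso_closed h₀ ⟨Iso.refl A₀, φ, Iso.refl D, by simp, by simp [φ]⟩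
  obtain ⟨hi⟩ := (𝒲.kc_of_mem h).isKernel
  obtain ⟨hi'⟩ := nonempty_isLimit_kernelFork_of_isPullback_s10 hi sq hi'p w'
  exact 𝒲.W_of_isLimit mem_transport hi'

end WeaklyExactStructure

/-- The pushout of an admissible short exact sequence along any morphism exists and yields an
admissible short exact sequence of the weakly exact structure, with the cokernel part induced
uniquely; dually pullbacks of admissible short exact sequences yield admissible short exact
sequences. -/
theorem statement10 (𝒲 : WeaklyExactStructure C) {A B Z A' : C} {i : A ⟶ B} {d : B ⟶ Z}
    (h : 𝒲.W i d) (t : A ⟶ A') :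
    (∃ (B' : C) (g : B ⟶ B') (i' : A' ⟶ B'), IsPushout i t g i' ∧
      ∃ d' : B' ⟶ Z, (g ≫ d' = d ∧ i' ≫ d' = 0) ∧
        (∀ d'' : B' ⟶ Z, g ≫ d'' = d → i' ≫ d'' = 0 → d'' = d') ∧
        IsKernelCokernelPair i' d' ∧ 𝒲.W i' d') ∧
    (∀ {D : C} (c : D ⟶ Z), ∃ (P : C) (p : P ⟶ B) (q : P ⟶ D), IsPullback p q d c ∧
      ∃ i'' : A ⟶ P, i'' ≫ p = i ∧ i'' ≫ q = 0 ∧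
        IsKernelCokernelPair i'' q ∧ 𝒲.W i'' q) := by
  have w : i ≫ d = 0 := (𝒲.kc_of_mem h).w
  refine ⟨?_, fun c ↦ ?_⟩
  · obtain ⟨B', g, i', sq, -⟩ := 𝒲.pushout_mem h t
    obtain ⟨d', hgd', w'⟩ := sq.exists_desc d 0 (by rw [w, comp_zero])
    have hW : 𝒲.W i' d' := 𝒲.W_of_isPushout h sq hgd' w'
    exact ⟨B', g, i', sq, d', ⟨hgd', w'⟩,
      fun d'' hgd'' w'' ↦ sq.hom_ext (hgd''.trans hgd'.symm) (w''.trans w'.symm),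
      𝒲.kc_of_mem hW, hW⟩
  · obtain ⟨P, p, q, sq, -⟩ := 𝒲.pullback_mem h c
    obtain ⟨i', hi'p, w'⟩ := sq.exists_lift i 0 (by rw [w, zero_comp])
    have hW : 𝒲.W i' q := 𝒲.W_of_isPullback h sq hi'p w'
    exact ⟨P, p, q, sq, i', hi'p, w', 𝒲.kc_of_mem hW, hW⟩

end Statement

end WeaklyExactPaper
end

section
/- Let 𝒲 be a weakly exact structure on an additive category 𝒜 and let (i₁ : A ⟶ B₁, d₁ : B₁ ⟶ C) and (i₂ : A ⟶ B₂, d₂ : B₂ ⟶ C) be two pairs in 𝒲 with the same end terms A and C. Then any Baer sum of these two pairs — i.e. the kernel–cokernel pair obtained from the direct sum pair (i₁ ⊕ i₂ : A ⊕ A ⟶ B₁ ⊕ B₂, d₁ ⊕ d₂ : B₁ ⊕ B₂ ⟶ C ⊕ C) by first forming a pullback of d₁ ⊕ d₂ along the diagonal Δ_C : C ⟶ C ⊕ C and then forming a pushout of the resulting admissible monic along the codiagonal ∇_A : A ⊕ A ⟶ A — is again a pair from A to C belonging to 𝒲. -/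
/-!
A morphism determines its kernel and its cokernel up to isomorphism, so a kernel–cokernel pair
belongs to `𝒲` as soon as its epic is an admissible epic, or its monic an admissible monic. Since
the epic of the pulled-back pair is admissible by (E2)ᵒᵖ, and the kernel of `d` lifts to a kernel
of any pullback of `d`, the pullback of a pair in `𝒲` lies in `𝒲` for every choice of pullback.
The Baer sum is such a pullback of `(i₁ ⊕ i₂, d₁ ⊕ d₂)` followed by a pushout, to which the dual
argument applies.
-/

open CategoryTheory CategoryTheory.Limits ZeroObject

universe w v u

namespace WeaklyExactPaper

section Statement

variable {C : Type u} [Category.{v} C] [Preadditive C] [HasZeroObject C] [HasBinaryBiproducts C]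

section Kernels

variable {D : Type*} [Category* D] [HasZeroMorphisms D]

theorem nonempty_isLimit_kernelFork_of_isPullback_s11 {K B Z P Y : D} {k : K ⟶ B} {f : B ⟶ Z}
    {p : P ⟶ B} {q : P ⟶ Y} {t : Y ⟶ Z} {w : k ≫ f = 0}
    (hk : Nonempty (IsLimit (KernelFork.ofι k w))) (hpb : IsPullback p q f t)
    {k' : K ⟶ P} (hk'p : k' ≫ p = k) (hk'q : k' ≫ q = 0) :
    Nonempty (IsLimit (KernelFork.ofι k' hk'q)) := by
  obtain ⟨hk⟩ := hk
  have : Mono k := mono_of_isLimit_fork hk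
  have : Mono k' := mono_of_mono_fac hk'p
  refine ⟨KernelFork.IsLimit.ofι' k' hk'q fun {T} x hx ↦ ?_⟩
  have hxpf : (x ≫ p) ≫ f = 0 := by rw [Category.assoc, hpb.w, reassoc_of% hx, zero_comp]
  obtain ⟨l, hl : l ≫ k = x ≫ p⟩ := KernelFork.IsLimit.lift' hk (x ≫ p) hxpf
  refine ⟨l, hpb.hom_ext ?_ ?_⟩
  · rw [Category.assoc, hk'p, hl]
  · rw [Category.assoc, hk'q, comp_zero, hx]

theorem nonempty_isColimit_cokernelCofork_of_isPushout_s11 {A B Q A' S : D} {f : A ⟶ B} {c : B ⟶ Q}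
    {t : A ⟶ A'} {g : B ⟶ S} {f' : A' ⟶ S} {w : f ≫ c = 0}
    (hc : Nonempty (IsColimit (CokernelCofork.ofπ c w))) (hpo : IsPushout f t g f')
    {c' : S ⟶ Q} (hgc' : g ≫ c' = c) (hf'c' : f' ≫ c' = 0) :
    Nonempty (IsColimit (CokernelCofork.ofπ c' hf'c')) := by
  obtain ⟨hc⟩ := hc
  have : Epi c := epi_of_isColimit_cofork hc
  have : Epi c' := epi_of_epi_fac hgc'
  refine ⟨CokernelCofork.IsColimit.ofπ' c' hf'c' fun {T} x hx ↦ ?_⟩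
  have hfgx : f ≫ g ≫ x = 0 := by rw [reassoc_of% hpo.w, hx, comp_zero]
  obtain ⟨l, hl : c ≫ l = g ≫ x⟩ := CokernelCofork.IsColimit.desc' hc (g ≫ x) hfgx
  refine ⟨l, hpo.hom_ext ?_ ?_⟩
  · rw [reassoc_of% hgc', hl]
  · rw [reassoc_of% hf'c', zero_comp, hx]

end Kernels

section Admissible

variable {𝒲 : WeaklyExactStructure C}

theorem AdmissibleEpic.mem_of_isKernel {A B Z : C} {i : A ⟶ B} {d : B ⟶ Z}
    (hd : AdmissibleEpic 𝒲 d) {w : i ≫ d = 0} (hi : Nonempty (IsLimit (KernelFork.ofι i w))) :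
    𝒲.W i d := by
  obtain ⟨A₀, i₀, hW⟩ := hd
  obtain ⟨hi₀⟩ := (𝒲.kc_of_mem hW).isKernel
  obtain ⟨hi⟩ := hi
  let e : A₀ ≅ A := hi₀.conePointUniqueUpToIso hi
  have he : e.hom ≫ i = i₀ := hi₀.conePointUniqueUpToIso_hom_comp hi WalkingParallelPair.zero
  exact 𝒲.iso_closed hW ⟨e, Iso.refl B, Iso.refl Z, by simp [he], by simp⟩

theorem AdmissibleMonic.mem_of_isCokernel {A B Z : C} {i : A ⟶ B} {d : B ⟶ Z}
    (hi : AdmissibleMonic 𝒲 i) {w : i ≫ d = 0}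
    (hd : Nonempty (IsColimit (CokernelCofork.ofπ d w))) : 𝒲.W i d := by
  obtain ⟨Z₀, d₀, hW⟩ := hi
  obtain ⟨hd₀⟩ := (𝒲.kc_of_mem hW).isCokernel
  obtain ⟨hd⟩ := hd
  let e : Z₀ ≅ Z := hd₀.coconePointUniqueUpToIso hd
  have he : d₀ ≫ e.hom = d := hd₀.comp_coconePointUniqueUpToIso_hom hd WalkingParallelPair.one
  exact 𝒲.iso_closed hW ⟨Iso.refl A, Iso.refl B, e, by simp, by simp [he]⟩

theorem AdmissibleEpic.of_isPullback_s11 {B Z P Y : C} {d : B ⟶ Z} {p : P ⟶ B} {q : P ⟶ Y}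
    {t : Y ⟶ Z} (hd : AdmissibleEpic 𝒲 d) (hpb : IsPullback p q d t) : AdmissibleEpic 𝒲 q := by
  obtain ⟨A, i, hW⟩ := hd
  obtain ⟨P₀, p₀, q₀, hpb₀, A₀, i₀, hW₀⟩ := 𝒲.pullback_mem hW t
  let e : P₀ ≅ P := hpb₀.isoIsPullback B Y hpb
  have he : e.hom ≫ q = q₀ := hpb₀.isoIsPullback_hom_snd B Y hpb
  exact ⟨A₀, i₀ ≫ e.hom, 𝒲.iso_closed hW₀ ⟨Iso.refl A₀, e, Iso.refl Y, by simp, by simp [he]⟩⟩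

theorem AdmissibleMonic.of_isPushout_s11 {A B A' S : C} {i : A ⟶ B} {t : A ⟶ A'} {g : B ⟶ S}
    {j : A' ⟶ S} (hi : AdmissibleMonic 𝒲 i) (hpo : IsPushout i t g j) : AdmissibleMonic 𝒲 j := by
  obtain ⟨Z, d, hW⟩ := hi
  obtain ⟨S₀, g₀, j₀, hpo₀, Z₀, d₀, hW₀⟩ := 𝒲.pushout_mem hW t
  let e : S₀ ≅ S := hpo₀.isoIsPushout B A' hpo
  have he : j₀ ≫ e.hom = j := hpo₀.inr_isoIsPushout_hom B A' hpo
  exact ⟨Z₀, e.inv ≫ d₀, 𝒲.iso_closed hW₀ ⟨Iso.refl A', e, Iso.refl Z₀, by simp [he], by simp⟩⟩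

theorem WeaklyExactStructure.mem_of_isPullback {A B Z P Y : C} {i : A ⟶ B} {d : B ⟶ Z}
    {p : P ⟶ B} {q : P ⟶ Y} {t : Y ⟶ Z} (h : 𝒲.W i d) (hpb : IsPullback p q d t)
    {i' : A ⟶ P} (hi'p : i' ≫ p = i) (hi'q : i' ≫ q = 0) : 𝒲.W i' q :=
  have hq : AdmissibleEpic 𝒲 q := AdmissibleEpic.of_isPullback_s11 ⟨A, i, h⟩ hpb
  hq.mem_of_isKernel <|
    nonempty_isLimit_kernelFork_of_isPullback_s11 (𝒲.kc_of_mem h).isKernel hpb hi'p hi'q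

theorem WeaklyExactStructure.mem_of_isPushout {A B Z A' S : C} {i : A ⟶ B} {d : B ⟶ Z}
    {t : A ⟶ A'} {g : B ⟶ S} {j : A' ⟶ S} (h : 𝒲.W i d) (hpo : IsPushout i t g j)
    {d' : S ⟶ Z} (hgd' : g ≫ d' = d) (hjd' : j ≫ d' = 0) : 𝒲.W j d' :=
  have hj : AdmissibleMonic 𝒲 j := AdmissibleMonic.of_isPushout_s11 ⟨Z, d, h⟩ hpo
  hj.mem_of_isCokernel <|
    nonempty_isColimit_cokernelCofork_of_isPushout_s11 (𝒲.kc_of_mem h).isCokernel hpo hgd' hjd'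

end Admissible

/-- The Baer sum of two admissible short exact sequences from `A` to `Z` of a weakly exact
structure — obtained from the direct sum sequence by a pullback along the diagonal `Δ_Z`
followed by a pushout along the codiagonal `∇_A` — again belongs to the weakly exact
structure. -/
theorem statement11 (𝒲 : WeaklyExactStructure C)
    {A B₁ B₂ Z : C} {i₁ : A ⟶ B₁} {d₁ : B₁ ⟶ Z} {i₂ : A ⟶ B₂} {d₂ : B₂ ⟶ Z}
    (h₁ : 𝒲.W i₁ d₁) (h₂ : 𝒲.W i₂ d₂)
    {P : C} (p : P ⟶ B₁ ⊞ B₂) (dP : P ⟶ Z)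
    (hpb : IsPullback p dP (biprod.map d₁ d₂) (biprod.lift (𝟙 Z) (𝟙 Z)))
    (iP : A ⊞ A ⟶ P) (hiP₁ : iP ≫ p = biprod.map i₁ i₂) (hiP₂ : iP ≫ dP = 0)
    {S : C} (g : P ⟶ S) (i₃ : A ⟶ S)
    (hpo : IsPushout iP (biprod.desc (𝟙 A) (𝟙 A)) g i₃)
    (d₃ : S ⟶ Z) (hd₃₁ : g ≫ d₃ = dP) (hd₃₂ : i₃ ≫ d₃ = 0) :
    𝒲.W i₃ d₃ := by
  have hsum : 𝒲.W (biprod.map i₁ i₂) (biprod.map d₁ d₂) := 𝒲.sum_mem h₁ h₂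
  have hP : 𝒲.W iP dP := WeaklyExactStructure.mem_of_isPullback hsum hpb hiP₁ hiP₂
  exact WeaklyExactStructure.mem_of_isPushout hP hpo hd₃₁ hd₃₂

end Statement

end WeaklyExactPaper
end
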